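/- For every t ∈ [0,T]: |||(Φ_1(t), Φ_0(t), Φ_VE^1(t), …, Φ_VE^M(t))|||_A ≤ 2·|||(Φ_1(T), Φ_0(T), Φ_VE^1(T), …, Φ_VE^M(T))|||_A; i.e., the discrete dual solution is uniformly bounded in time in the energy seminorm by twice its end-time energy seminorm. -/

import Mathlib

/-!
The unknown `W = (Φ1, Φ0, ΦVE)` solves an abstract evolution equation `A Ẇ = B W`, where `A` is the
energy form and `B` couples the components. The elastic and viscoelastic couplings in `B` are
skew-symmetric, so only the relaxation terms survive in `B w w`, which is therefore nonnegative.

A continuous, piecewise affine trial function tested against constants sees `W` only through its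
average over the interval, so the scheme is Crank–Nicolson. Testing with `W a + W b` gives
`A (W b) (W b) - A (W a) (W a) = (b - a) / 2 * B (W a + W b) (W a + W b) ≥ 0`: the energy is
nondecreasing along the nodes. As the energy is convex, its maximum over each interval is attained
at a node, so the end-time energy dominates; even the constant `1` is enough.
-/

theorem le_apply_last_of_forall_le_apply_succ {α β : Type*} [LinearOrder α] [Preorder β] {f : α → β}
    {t : ℕ → α} {N : ℕ} (ht : ∀ n < N, t n ≤ t (n + 1))
    (hf : ∀ n < N, ∀ s ∈ Set.Icc (t n) (t (n + 1)), f s ≤ f (t (n + 1)))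
    {s : α} (hs : s ∈ Set.Icc (t 0) (t N)) : f s ≤ f (t N) := by
  induction N with
  | zero => rw [le_antisymm hs.2 hs.1]
  | succ N ih =>
    rcases le_total s (t N) with hsN | hsN
    · calc f s ≤ f (t N) :=
            ih (fun n hn => ht n (hn.trans N.lt_succ_self))
              (fun n hn => hf n (hn.trans N.lt_succ_self)) ⟨hs.1, hsN⟩
        _ ≤ f (t (N + 1)) :=
            hf N N.lt_succ_self (t N) (Set.left_mem_Icc.2 (ht N N.lt_succ_self))
    · exact hf N N.lt_succ_self s ⟨hsN, hs.2⟩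

section Affine

variable {E F : Type*} [AddCommGroup E] [Module ℝ E] [AddCommGroup F] [Module ℝ F]

/-- `W` is affine on `[a, b]`, expressed as linear interpolation between its values at the
endpoints. Values outside `[a, b]` are unconstrained. -/
def IsAffineOnIcc (W : ℝ → E) (a b : ℝ) : Prop :=
  ∀ s ∈ Set.Icc a b, W s = W a + ((s - a) / (b - a)) • (W b - W a)

namespace IsAffineOnIcc

variable {W : ℝ → E} {a b : ℝ}

theorem const (c : E) : IsAffineOnIcc (fun _ => c) a b := fun _ _ => by simp

theorem add {W' : ℝ → E} (hW : IsAffineOnIcc W a b) (hW' : IsAffineOnIcc W' a b) :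
    IsAffineOnIcc (fun s => W s + W' s) a b := fun s hs => by
  simp only [hW s hs, hW' s hs]
  module

theorem map (hW : IsAffineOnIcc W a b) (f : E →ₗ[ℝ] F) :
    IsAffineOnIcc (fun s => f (W s)) a b := fun s hs => by
  simp only [hW s hs, map_add, map_smul, map_sub]

theorem prodMk {W' : ℝ → F} (hW : IsAffineOnIcc W a b) (hW' : IsAffineOnIcc W' a b) :
    IsAffineOnIcc (fun s => (W s, W' s)) a b := fun s hs =>
  Prod.ext (hW s hs) (hW' s hs)

theorem pi {ι : Type*} {W : ι → ℝ → E} (hW : ∀ i, IsAffineOnIcc (W i) a b) :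
    IsAffineOnIcc (fun s i => W i s) a b := fun s hs =>
  funext fun i => hW i s hs

theorem mem_segment (hW : IsAffineOnIcc W a b) {s : ℝ} (hs : s ∈ Set.Icc a b) :
    W s ∈ segment ℝ (W a) (W b) := by
  rw [segment_eq_image']
  have hab : 0 ≤ b - a := sub_nonneg.2 (hs.1.trans hs.2)
  exact ⟨(s - a) / (b - a), ⟨div_nonneg (sub_nonneg.2 hs.1) hab,
    div_le_one_of_le₀ (sub_le_sub_right hs.2 a) hab⟩, (hW s hs).symm⟩

theorem intervalIntegral_eq {G : Type*} [NormedAddCommGroup G] [NormedSpace ℝ G] [CompleteSpace G]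
    {g : ℝ → G} (hg : IsAffineOnIcc g a b) (hab : a < b) :
    ∫ s in a..b, g s = ((b - a) / 2) • (g a + g b) := by
  have hba : b - a ≠ 0 := (sub_pos.2 hab).ne'
  calc ∫ s in a..b, g s
      = ∫ s in a..b, (g a + ((s - a) / (b - a)) • (g b - g a)) :=
        intervalIntegral.integral_congr fun s hs => hg s (Set.uIcc_of_le hab.le ▸ hs)
    _ = (b - a) • g a + ((b - a) / 2) • (g b - g a) := by
        rw [intervalIntegral.integral_add (continuous_const.intervalIntegrable _ _)
          ((by fun_prop : Continuous fun s : ℝ => ((s - a) / (b - a)) • (g b - g a))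
            |>.intervalIntegrable _ _), intervalIntegral.integral_const,
          intervalIntegral.integral_smul_const, intervalIntegral.integral_div,
          intervalIntegral.integral_comp_sub_right (fun s => s), integral_id]
        congr 2
        field_simp
        ring
    _ = ((b - a) / 2) • (g a + g b) := by module

end IsAffineOnIcc

end Affine

section BilinearForms

open LinearMap (BilinForm)

theorem convexOn_apply_self_of_isNonneg {𝕜 M : Type*} [CommRing 𝕜] [LinearOrder 𝕜]
    [IsStrictOrderedRing 𝕜] [AddCommGroup M] [Module 𝕜 M] {A : BilinForm 𝕜 M} (hA : A.IsNonneg) :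
    ConvexOn 𝕜 Set.univ fun x => A x x := by
  refine ⟨convex_univ, fun x _ y _ r q hr hq hrq => ?_⟩
  have hxy : 0 ≤ r * q * A (x - y) (x - y) := mul_nonneg (mul_nonneg hr hq) (hA.nonneg _)
  obtain rfl : q = 1 - r := by linarith
  simp only [map_add, map_sub, map_smul, LinearMap.add_apply, LinearMap.sub_apply,
    LinearMap.smul_apply, smul_eq_mul] at hxy ⊢
  linarith

theorem apply_sub_add_of_isSymm {R M : Type*} [CommRing R] [AddCommGroup M] [Module R M]
    {A : BilinForm R M} (hA : A.IsSymm) (x y : M) :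
    A (y - x) (x + y) = A y y - A x x := by
  simp only [map_add, map_sub, LinearMap.sub_apply, hA.eq y x]
  ring

end BilinearForms

section Galerkin

open LinearMap (BilinForm)

variable {E : Type*} [AddCommGroup E] [Module ℝ E] {A B : BilinForm ℝ E} {W : ℝ → E}

/-- `W` satisfies on `[a, b]` the discrete equation `A Ẇ = B W`, tested against all constants.
The derivative of `W` is replaced by the difference quotient over `[a, b]`, which it equals when
`W` is affine there. -/
def IsGalerkinStep (A B : BilinForm ℝ E) (W : ℝ → E) (a b : ℝ) : Prop :=
  ∀ v, ∫ s in a..b, (-A ((b - a)⁻¹ • (W b - W a)) v + B (W s) v) = 0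

namespace IsGalerkinStep

variable {a b : ℝ}

theorem crankNicolson (h : IsGalerkinStep A B W a b) (hW : IsAffineOnIcc W a b) (hab : a < b)
    (v : E) : A (W b - W a) v = (b - a) / 2 * B (W a + W b) v := by
  have hba : b - a ≠ 0 := (sub_pos.2 hab).ne'
  have haffine : IsAffineOnIcc (fun s => -A ((b - a)⁻¹ • (W b - W a)) v + B (W s) v) a b :=
    (IsAffineOnIcc.const _).add (hW.map (B.flip v))
  have htrapezoid := (haffine.intervalIntegral_eq hab).symm.trans (h v)
  simp only [map_add, map_smul, LinearMap.add_apply, LinearMap.smul_apply, smul_eq_mul]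
    at htrapezoid ⊢
  field_simp at htrapezoid
  linarith

theorem energy_le_right (h : IsGalerkinStep A B W a b) (hW : IsAffineOnIcc W a b) (hab : a < b)
    (hA : A.IsPosSemidef) (hB : B.IsNonneg) {s : ℝ} (hs : s ∈ Set.Icc a b) :
    A (W s) (W s) ≤ A (W b) (W b) := by
  have hincrement : A (W b) (W b) - A (W a) (W a) =
      (b - a) / 2 * B (W a + W b) (W a + W b) := by
    rw [← apply_sub_add_of_isSymm hA.isSymm, h.crankNicolson hW hab]
  have hnodes : A (W a) (W a) ≤ A (W b) (W b) :=
    sub_nonneg.1 <| hincrement ▸ mul_nonneg (by linarith) (hB.nonneg _)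
  calc A (W s) (W s) ≤ max (A (W a) (W a)) (A (W b) (W b)) :=
        (convexOn_apply_self_of_isNonneg hA.isNonneg).le_max_of_mem_segment
          (Set.mem_univ _) (Set.mem_univ _) (hW.mem_segment hs)
    _ = A (W b) (W b) := max_eq_right hnodes

theorem energy_le_final {t : ℕ → ℝ} {N : ℕ} (ht : ∀ n < N, t n < t (n + 1))
    (hW : ∀ n < N, IsAffineOnIcc W (t n) (t (n + 1)))
    (h : ∀ n < N, IsGalerkinStep A B W (t n) (t (n + 1)))
    (hA : A.IsPosSemidef) (hB : B.IsNonneg) {s : ℝ} (hs : s ∈ Set.Icc (t 0) (t N)) :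
    A (W s) (W s) ≤ A (W (t N)) (W (t N)) :=
  le_apply_last_of_forall_le_apply_succ (f := fun s => A (W s) (W s)) (fun n hn => (ht n hn).le)
    (fun n hn _ hs => (h n hn).energy_le_right (hW n hn) (ht n hn) hA hB hs) hs

end IsGalerkinStep

end Galerkin

section Viscoelastic

open LinearMap (BilinForm)

variable {V ι : Type*} [AddCommGroup V] [Module ℝ V] [Fintype ι]

/-- The energy form `m(v1, w1) + a_E(v0, w0) + ∑ i, a_VE^i(vVE^i, wVE^i)` on the product space of
triples `(v1, v0, vVE)`; the square of the energy seminorm is its diagonal. -/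
def viscoelasticEnergyForm (mF aE : BilinForm ℝ V) (aVE : ι → BilinForm ℝ V) :
    BilinForm ℝ (V × V × (ι → V)) :=
  let π1 := LinearMap.fst ℝ V (V × (ι → V))
  let π0 := LinearMap.fst ℝ V (ι → V) ∘ₗ LinearMap.snd ℝ V (V × (ι → V))
  let πVE := fun i =>
    LinearMap.proj i ∘ₗ LinearMap.snd ℝ V (ι → V) ∘ₗ LinearMap.snd ℝ V (V × (ι → V))
  mF.compl₁₂ π1 π1 + aE.compl₁₂ π0 π0 + ∑ i, (aVE i).compl₁₂ (πVE i) (πVE i)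

/-- The part of the dual equations free of time derivatives, as a bilinear form in the dual
solution and the test function: elastic and viscoelastic couplings plus relaxation terms. -/
noncomputable def viscoelasticDualForm (aE : BilinForm ℝ V) (aVE : ι → BilinForm ℝ V) (τ : ι → ℝ) :
    BilinForm ℝ (V × V × (ι → V)) :=
  let π1 := LinearMap.fst ℝ V (V × (ι → V))
  let π0 := LinearMap.fst ℝ V (ι → V) ∘ₗ LinearMap.snd ℝ V (V × (ι → V))
  let πVE := fun i =>
    LinearMap.proj i ∘ₗ LinearMap.snd ℝ V (ι → V) ∘ₗ LinearMap.snd ℝ V (V × (ι → V))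
  aE.compl₁₂ π0 π1 - aE.compl₁₂ π1 π0 + ∑ i, ((aVE i).compl₁₂ (πVE i) π1
    - (aVE i).compl₁₂ π1 (πVE i) + (1 / τ i) • (aVE i).compl₁₂ (πVE i) (πVE i))

variable {mF aE : BilinForm ℝ V} {aVE : ι → BilinForm ℝ V} {τ : ι → ℝ}

theorem viscoelasticEnergyForm_apply (v w : V × V × (ι → V)) :
    viscoelasticEnergyForm mF aE aVE v w =
      mF v.1 w.1 + aE v.2.1 w.2.1 + ∑ i, aVE i (v.2.2 i) (w.2.2 i) := by
  simp [viscoelasticEnergyForm]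

theorem viscoelasticDualForm_apply (v w : V × V × (ι → V)) :
    viscoelasticDualForm aE aVE τ v w = aE v.2.1 w.1 - aE v.1 w.2.1 +
      ∑ i, (aVE i (v.2.2 i) w.1 - aVE i v.1 (w.2.2 i) +
        (1 / τ i) * aVE i (v.2.2 i) (w.2.2 i)) := by
  simp [viscoelasticDualForm]

theorem isPosSemidef_viscoelasticEnergyForm (hm : mF.IsPosSemidef) (hE : aE.IsPosSemidef)
    (hVE : ∀ i, (aVE i).IsPosSemidef) : (viscoelasticEnergyForm mF aE aVE).IsPosSemidef where
  eq v w := by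
    simp only [viscoelasticEnergyForm_apply, hm.isSymm.eq v.1, hE.isSymm.eq v.2.1,
      fun i => (hVE i).isSymm.eq (v.2.2 i)]
  nonneg v := by
    rw [viscoelasticEnergyForm_apply]
    exact add_nonneg (add_nonneg (hm.nonneg _) (hE.nonneg _))
      (Finset.sum_nonneg fun i _ => (hVE i).nonneg _)

theorem viscoelasticDualForm_apply_self (hE : aE.IsSymm) (hVE : ∀ i, (aVE i).IsSymm)
    (v : V × V × (ι → V)) :
    viscoelasticDualForm aE aVE τ v v = ∑ i, (1 / τ i) * aVE i (v.2.2 i) (v.2.2 i) := by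
  simp only [viscoelasticDualForm_apply, hE.eq v.2.1, fun i => (hVE i).eq (v.2.2 i) v.1,
    sub_self, zero_add]

theorem isNonneg_viscoelasticDualForm (hE : aE.IsSymm) (hVE : ∀ i, (aVE i).IsPosSemidef)
    (hτ : ∀ i, 0 < τ i) : (viscoelasticDualForm aE aVE τ).IsNonneg where
  nonneg v := by
    rw [viscoelasticDualForm_apply_self hE fun i => (hVE i).isSymm]
    exact Finset.sum_nonneg fun i _ =>
      mul_nonneg (one_div_pos.2 (hτ i)).le ((hVE i).nonneg _)

theorem viscoelastic_dual_uniform_energy_bound_general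
    (hm : mF.IsPosSemidef) (hE : aE.IsPosSemidef) (hVE : ∀ i, (aVE i).IsPosSemidef)
    (hτ : ∀ i, 0 < τ i) {t : ℕ → ℝ} {N : ℕ} (ht : ∀ n < N, t n < t (n + 1))
    {Φ1 Φ0 : ℝ → V} {ΦVE : ι → ℝ → V}
    (hΦ1 : ∀ n < N, IsAffineOnIcc Φ1 (t n) (t (n + 1)))
    (hΦ0 : ∀ n < N, IsAffineOnIcc Φ0 (t n) (t (n + 1)))
    (hΦVE : ∀ i, ∀ n < N, IsAffineOnIcc (ΦVE i) (t n) (t (n + 1)))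
    (hdual : ∀ n < N, ∀ (v1 v0 : V) (vVE : ι → V),
      (∫ s in t n..t (n + 1),
        (-(mF ((t (n + 1) - t n)⁻¹ • (Φ1 (t (n + 1)) - Φ1 (t n))) v1)
          - aE ((t (n + 1) - t n)⁻¹ • (Φ0 (t (n + 1)) - Φ0 (t n))) v0
          - ∑ i, aVE i ((t (n + 1) - t n)⁻¹ • (ΦVE i (t (n + 1)) - ΦVE i (t n))) (vVE i)
          + aE (Φ0 s) v1 - aE (Φ1 s) v0
          + ∑ i, (aVE i (ΦVE i s) v1 - aVE i (Φ1 s) (vVE i)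
              + (1 / τ i) * aVE i (ΦVE i s) (vVE i)))) = 0)
    {s : ℝ} (hs : s ∈ Set.Icc (t 0) (t N)) :
    √(mF (Φ1 s) (Φ1 s) + aE (Φ0 s) (Φ0 s) + ∑ i, aVE i (ΦVE i s) (ΦVE i s))
      ≤ √(mF (Φ1 (t N)) (Φ1 (t N)) + aE (Φ0 (t N)) (Φ0 (t N))
          + ∑ i, aVE i (ΦVE i (t N)) (ΦVE i (t N))) := by
  let W : ℝ → V × V × (ι → V) := fun s => (Φ1 s, Φ0 s, fun i => ΦVE i s)
  have hW : ∀ n < N, IsAffineOnIcc W (t n) (t (n + 1)) := fun n hn =>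
    (hΦ1 n hn).prodMk ((hΦ0 n hn).prodMk (.pi fun i => hΦVE i n hn))
  have hstep : ∀ n < N, IsGalerkinStep (viscoelasticEnergyForm mF aE aVE)
      (viscoelasticDualForm aE aVE τ) W (t n) (t (n + 1)) := fun n hn v => by
    rw [← hdual n hn v.1 v.2.1 v.2.2]
    refine intervalIntegral.integral_congr fun s _ => ?_
    simp only [viscoelasticEnergyForm_apply, viscoelasticDualForm_apply, W, Prod.smul_fst,
      Prod.smul_snd, Prod.fst_sub, Prod.snd_sub, Pi.smul_apply, Pi.sub_apply]
    ring
  have henergy := IsGalerkinStep.energy_le_final ht hW hstep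
    (isPosSemidef_viscoelasticEnergyForm hm hE hVE)
    (isNonneg_viscoelasticDualForm hE.isSymm hVE hτ) hs
  simp only [viscoelasticEnergyForm_apply] at henergy
  exact Real.sqrt_le_sqrt henergy

end Viscoelastic

/-- The discrete dual solution is uniformly bounded in time in the energy
seminorm by twice its end-time energy seminorm: for every `s ∈ [0, T]`,
`|||(Φ1(s), Φ0(s), ΦVE(s))|||_A ≤ 2 |||(Φ1(T), Φ0(T), ΦVE(T))|||_A`, where
`|||(v1,v0,vVE)|||_A = (m(v1,v1) + a_E(v0,v0) + ∑_m a_VE^m(vVE^m,vVE^m))^{1/2}`. -/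
theorem viscoelastic_dual_uniform_energy_bound
    {V : Type*} [NormedAddCommGroup V] [NormedSpace ℝ V]
    (M N : ℕ) (hM : 1 ≤ M) (hN : 1 ≤ N)
    (mF aE : V →L[ℝ] V →L[ℝ] ℝ) (aVE : Fin M → V →L[ℝ] V →L[ℝ] ℝ)
    (hmF_symm : ∀ x y : V, mF x y = mF y x)
    (haE_symm : ∀ x y : V, aE x y = aE y x)
    (haVE_symm : ∀ (m : Fin M) (x y : V), aVE m x y = aVE m y x)
    (hmF_pos : ∀ x : V, 0 ≤ mF x x)
    (haE_pos : ∀ x : V, 0 ≤ aE x x)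
    (haVE_pos : ∀ (m : Fin M) (x : V), 0 ≤ aVE m x x)
    (τ : Fin M → ℝ) (hτ : ∀ m, 0 < τ m)
    (t : ℕ → ℝ) (ht0 : t 0 = 0) (htmono : ∀ n < N, t n < t (n + 1))
    (Φ1 Φ0 : ℝ → V) (ΦVE : Fin M → ℝ → V)
    -- `Φ1`, `Φ0`, `ΦVE m` are continuous and affine on each `[t_n, t_{n+1}]`
    (hΦ1aff : ∀ n < N, ∀ s ∈ Set.Icc (t n) (t (n + 1)),
      Φ1 s = Φ1 (t n) + ((s - t n) / (t (n + 1) - t n)) • (Φ1 (t (n + 1)) - Φ1 (t n)))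
    (hΦ0aff : ∀ n < N, ∀ s ∈ Set.Icc (t n) (t (n + 1)),
      Φ0 s = Φ0 (t n) + ((s - t n) / (t (n + 1) - t n)) • (Φ0 (t (n + 1)) - Φ0 (t n)))
    (hΦVEaff : ∀ (m : Fin M), ∀ n < N, ∀ s ∈ Set.Icc (t n) (t (n + 1)),
      ΦVE m s = ΦVE m (t n)
        + ((s - t n) / (t (n + 1) - t n)) • (ΦVE m (t (n + 1)) - ΦVE m (t n)))
    -- the discrete dual equations (the time derivative of a trial function on
    -- `(t_n, t_{n+1})` is the constant `(W(t_{n+1}) - W(t_n))/k_n`)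
    (hdual : ∀ n < N, ∀ (v1 v0 : V) (vVE : Fin M → V),
      (∫ s in t n..t (n + 1),
        (-(mF ((t (n + 1) - t n)⁻¹ • (Φ1 (t (n + 1)) - Φ1 (t n))) v1)
          - aE ((t (n + 1) - t n)⁻¹ • (Φ0 (t (n + 1)) - Φ0 (t n))) v0
          - ∑ m, aVE m ((t (n + 1) - t n)⁻¹ • (ΦVE m (t (n + 1)) - ΦVE m (t n))) (vVE m)
          + aE (Φ0 s) v1 - aE (Φ1 s) v0
          + ∑ m, (aVE m (ΦVE m s) v1 - aVE m (Φ1 s) (vVE m)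
              + (1 / τ m) * aVE m (ΦVE m s) (vVE m)))) = 0) :
    ∀ s ∈ Set.Icc (t 0) (t N),
      Real.sqrt (mF (Φ1 s) (Φ1 s) + aE (Φ0 s) (Φ0 s)
          + ∑ m, aVE m (ΦVE m s) (ΦVE m s))
        ≤ 2 * Real.sqrt (mF (Φ1 (t N)) (Φ1 (t N)) + aE (Φ0 (t N)) (Φ0 (t N))
            + ∑ m, aVE m (ΦVE m (t N)) (ΦVE m (t N))) :=
  fun _ hs => (viscoelastic_dual_uniform_energy_bound_general (mF := mF.toBilinForm)
    (aE := aE.toBilinForm) (aVE := fun m => (aVE m).toBilinForm) ⟨⟨hmF_symm⟩, ⟨hmF_pos⟩⟩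
    ⟨⟨haE_symm⟩, ⟨haE_pos⟩⟩ (fun m => ⟨⟨haVE_symm m⟩, ⟨haVE_pos m⟩⟩) hτ htmono hΦ1aff hΦ0aff
    hΦVEaff hdual hs).trans (le_mul_of_one_le_left (Real.sqrt_nonneg _) one_le_two)
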